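/- Let B̂ = ℂ[x₁,…,xₙ, y, z]/(x₁^{m₁}⋯xₙ^{mₙ} z − y^r) with all mᵢ ≥ 2 and r ≥ 2. Then every nonzero locally nilpotent ℂ-derivation ∂̂ of B̂ satisfies Ker ∂̂ = ℂ[x₁,…,xₙ] (the image of the polynomial subring in x₁,…,xₙ). -/

import Mathlib

open MvPolynomial

set_option synthInstance.maxHeartbeats 1000000
set_option maxHeartbeats 1000000

/-!
Reading `z` as `x^(-m) y^r` identifies the coordinate ring with a monoid algebra `k[S]`, where `S`
consists of exponents of Laurent monomials in `x` and `y`. The part of degree `e` of a derivation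
`D` of `k[S]` is `χ^u ↦ ℓ(u) χ^(u + e)` with `ℓ` additive. Let `w` be the monomial valuation with
`w(xᵢ) = r`, `w(y) = mᵢ` and weight `0` at the remaining variables, and suppose that `w(e) < 0` and
`ℓ(xᵢ) ≠ 0`. Additivity on the relation `∑ mⱼ xⱼ + z = r y` in `S` then gives `ℓ(y) ≠ 0`, so both
`xᵢ + e` and `y + e` lie in `S`; this is impossible when `r, mᵢ ≥ 2`. Hence every monomial of
`D xᵢ` has weight at least `r`, and `xᵢ^N` divides `(D xᵢ)^(N + mᵢ)` for all `N`. If `D` is locally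
nilpotent, comparing the degrees it induces on both sides gives `D xᵢ = 0`. Then `y D f = E(f) D y`
for the Euler derivation `E` of the grading by the exponent of `y`, so when `D ≠ 0` the kernel of
`D` is that of `E`, which is the polynomial ring in the `xᵢ`.
-/

open scoped AddMonoidAlgebra
open AddMonoidAlgebra (single)
open Finset.HasAntidiagonal (antidiagonal mem_antidiagonal)

section LocallyNilpotent

variable {k A : Type*} [CommRing k] [CommRing A] [Algebra k A]

/-- Locally nilpotent derivations: every element is killed by some iterate. -/
def IsLocallyNilpotent (D : Derivation k A A) : Prop :=
  ∀ a, ∃ n : ℕ, (⇑D)^[n] a = 0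

/-- The degree function of a locally nilpotent derivation `D`: the largest `n` with `Dⁿ a ≠ 0`.
The value at `0` is the junk value `0`, where the literature has `-∞`. -/
noncomputable def nilDegree (D : Derivation k A A) (a : A) : ℕ :=
  sInf {n | (⇑D)^[n + 1] a = 0}

variable {D : Derivation k A A} {a b : A}

lemma iterate_derivation_mul (D : Derivation k A A) (n : ℕ) (a b : A) :
    (⇑D)^[n] (a * b) =
      ∑ ij ∈ antidiagonal n, n.choose ij.1 • ((⇑D)^[ij.1] a * (⇑D)^[ij.2] b) := by
  induction n with
  | zero => simp
  | succ n ih =>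
    rw [Finset.sum_antidiagonal_choose_succ_nsmul (fun i j => (⇑D)^[i] a * (⇑D)^[j] b) n]
    simp only [Function.iterate_succ_apply', ih, map_sum, map_nsmul, Derivation.leibniz,
      smul_eq_mul, smul_add, Finset.sum_add_distrib, add_right_inj]
    refine Finset.sum_congr rfl fun ⟨i, j⟩ hij => ?_
    rw [n.choose_symm_of_eq_add (mem_antidiagonal.1 hij).symm, mul_comm]

lemma iterate_derivation_eq_zero_of_le {n p : ℕ} (h : (⇑D)^[n] a = 0) (hnp : n ≤ p) :
    (⇑D)^[p] a = 0 := by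
  obtain ⟨q, rfl⟩ := Nat.exists_eq_add_of_le' hnp
  rw [Function.iterate_add_apply, h, iterate_map_zero]

lemma iterate_nilDegree_ne_zero (D : Derivation k A A) (ha : a ≠ 0) :
    (⇑D)^[nilDegree D a] a ≠ 0 := by
  rcases h : nilDegree D a with _ | n
  · exact ha
  · exact Nat.notMem_of_lt_sInf (h ▸ n.lt_succ_self : n < nilDegree D a)

lemma IsLocallyNilpotent.iterate_nilDegree_succ (hD : IsLocallyNilpotent D) (a : A) :
    (⇑D)^[nilDegree D a + 1] a = 0 := by
  obtain ⟨n, hn⟩ := hD a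
  exact Nat.sInf_mem (s := {n | (⇑D)^[n + 1] a = 0})
    ⟨n, iterate_derivation_eq_zero_of_le hn n.le_succ⟩

lemma nilDegree_eq {n : ℕ} (hn : (⇑D)^[n] a ≠ 0) (hn' : (⇑D)^[n + 1] a = 0) :
    nilDegree D a = n :=
  le_antisymm (Nat.sInf_le hn') <| le_csInf ⟨n, hn'⟩ fun _ hp =>
    not_lt.1 fun hpn => hn (iterate_derivation_eq_zero_of_le hp hpn)

lemma IsLocallyNilpotent.nilDegree_apply (hD : IsLocallyNilpotent D) (ha : D a ≠ 0) :
    nilDegree D a = nilDegree D (D a) + 1 :=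
  nilDegree_eq (iterate_nilDegree_ne_zero D ha) (hD.iterate_nilDegree_succ (D a))

lemma IsLocallyNilpotent.nilDegree_mul [IsDomain A] [CharZero A] (hD : IsLocallyNilpotent D)
    (ha : a ≠ 0) (hb : b ≠ 0) : nilDegree D (a * b) = nilDegree D a + nilDegree D b := by
  have iterate_eq_zero {c : A} {n : ℕ} (h : nilDegree D c < n) : (⇑D)^[n] c = 0 :=
    iterate_derivation_eq_zero_of_le (hD.iterate_nilDegree_succ c) h
  refine nilDegree_eq ?_ ?_
  · rw [iterate_derivation_mul, Finset.sum_eq_single (nilDegree D a, nilDegree D b)]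
    · exact smul_ne_zero (Nat.choose_pos (Nat.le_add_right _ _)).ne'
        (mul_ne_zero (iterate_nilDegree_ne_zero D ha) (iterate_nilDegree_ne_zero D hb))
    · rintro ⟨i, j⟩ hij hne
      rw [mem_antidiagonal] at hij
      rcases lt_trichotomy i (nilDegree D a) with hi | rfl | hi
      · rw [iterate_eq_zero (show nilDegree D b < j by omega), mul_zero, smul_zero]
      · exact absurd (congrArg (Prod.mk _) (Nat.add_left_cancel hij)) hne
      · rw [iterate_eq_zero hi, zero_mul, smul_zero]
    · simp
  · rw [iterate_derivation_mul]
    refine Finset.sum_eq_zero fun ⟨i, j⟩ hij => ?_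
    rw [mem_antidiagonal] at hij
    rcases lt_or_ge (nilDegree D a) i with hi | hi
    · rw [iterate_eq_zero hi, zero_mul, smul_zero]
    · rw [iterate_eq_zero (show nilDegree D b < j by omega), mul_zero, smul_zero]

lemma IsLocallyNilpotent.nilDegree_pow [IsDomain A] [CharZero A] (hD : IsLocallyNilpotent D)
    (ha : a ≠ 0) (n : ℕ) : nilDegree D (a ^ n) = n * nilDegree D a := by
  induction n with
  | zero => rw [pow_zero, zero_mul, nilDegree_eq (n := 0)] <;> simp
  | succ n ih => rw [pow_succ, hD.nilDegree_mul (pow_ne_zero n ha) ha, ih, add_one_mul]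

lemma IsLocallyNilpotent.nilDegree_le_of_dvd [IsDomain A] [CharZero A]
    (hD : IsLocallyNilpotent D) (hab : a ∣ b) (hb : b ≠ 0) : nilDegree D a ≤ nilDegree D b := by
  obtain ⟨c, rfl⟩ := hab
  rw [hD.nilDegree_mul (left_ne_zero_of_mul hb) (right_ne_zero_of_mul hb)]
  exact Nat.le_add_right _ _

/-- Comparing degrees, `N (d + 1) ≤ (N + c) d` for all `N`, where `d` is the degree of `D a`. -/
lemma IsLocallyNilpotent.apply_eq_zero_of_pow_dvd [IsDomain A] [CharZero A]
    (hD : IsLocallyNilpotent D) (c : ℕ) (h : ∀ N, a ^ N ∣ D a ^ (N + c)) : D a = 0 := by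
  by_contra hDa
  have ha : a ≠ 0 := fun ha => hDa (by rw [ha, map_zero])
  have hle (N : ℕ) : N * (nilDegree D (D a) + 1) ≤ (N + c) * nilDegree D (D a) := by
    rw [← hD.nilDegree_apply hDa, ← hD.nilDegree_pow ha, ← hD.nilDegree_pow hDa]
    exact hD.nilDegree_le_of_dvd (h N) (pow_ne_zero _ hDa)
  linarith [hle (c * nilDegree D (D a) + 1)]

end LocallyNilpotent

section Conjugation

variable {k A B : Type*} [CommRing k] [CommRing A] [CommRing B] [Algebra k A] [Algebra k B]

/-- The derivation `e ∘ D ∘ e⁻¹` obtained from `D` by transport along an isomorphism `e`. -/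
def conjDerivation (e : A ≃ₐ[k] B) (D : Derivation k A A) : Derivation k B B :=
  .mk' (e.toLinearMap ∘ₗ D.toLinearMap ∘ₗ e.symm.toLinearMap) fun a b => by simp

lemma conjDerivation_apply (e : A ≃ₐ[k] B) (D : Derivation k A A) (a : A) :
    conjDerivation e D (e a) = e (D a) :=
  congrArg (fun a' => e (D a')) (e.symm_apply_apply a)

lemma IsLocallyNilpotent.conjDerivation {D : Derivation k A A} (hD : IsLocallyNilpotent D)
    (e : A ≃ₐ[k] B) : IsLocallyNilpotent (conjDerivation e D) := by
  intro b
  obtain ⟨a, rfl⟩ := e.surjective b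
  obtain ⟨n, hn⟩ := hD a
  have hsemi : Function.Semiconj e D (_root_.conjDerivation e D) :=
    fun a => (conjDerivation_apply e D a).symm
  exact ⟨n, by rw [← (hsemi.iterate_right n).eq, hn, map_zero]⟩

lemma conjDerivation_ne_zero {D : Derivation k A A} (hD : D ≠ 0) (e : A ≃ₐ[k] B) :
    conjDerivation e D ≠ 0 := by
  contrapose! hD
  ext a
  apply e.injective
  rw [← conjDerivation_apply, hD, Derivation.zero_apply, Derivation.zero_apply, map_zero]

end Conjugation

section AddMonoidAlgebra

variable {k M : Type*} [CommSemiring k]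

/-- The diagonal map `χ^u ↦ ℓ u • χ^u`. For additive `ℓ` it is the Euler derivation of the
grading by `ℓ`. -/
noncomputable def eulerMap (ℓ : M → k) (f : k[M]) : k[M] :=
  f.coeff.sum fun u c => single u (ℓ u * c)

lemma coeff_eulerMap (ℓ : M → k) (f : k[M]) (u : M) :
    (eulerMap ℓ f).coeff u = ℓ u * f.coeff u := by
  classical
  simp only [eulerMap, Finsupp.sum, AddMonoidAlgebra.coeff_sum, AddMonoidAlgebra.coeff_single,
    Finsupp.finsetSum_apply, Finsupp.single_apply, Finset.sum_ite_eq']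
  exact ite_eq_left_iff.2 fun hu => by rw [Finsupp.notMem_support_iff.1 hu, mul_zero]

lemma eulerMap_add (ℓ : M → k) (f g : k[M]) : eulerMap ℓ (f + g) = eulerMap ℓ f + eulerMap ℓ g := by
  ext u
  simp [coeff_eulerMap, mul_add]

lemma eulerMap_single (ℓ : M → k) (u : M) (c : k) :
    eulerMap ℓ (single u c) = single u (ℓ u * c) := by
  simp [eulerMap]

variable [AddCommMonoid M]

lemma single_dvd_of_forall_mem_support {f : k[M]} {u : M}
    (h : ∀ w ∈ f.coeff.support, ∃ v, w = u + v) : single u 1 ∣ f := by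
  rw [← AddMonoidAlgebra.sum_coeff_single f]
  refine Finset.dvd_sum fun w hw => ?_
  obtain ⟨v, rfl⟩ := h w hw
  exact ⟨single v (f.coeff (u + v)), by rw [AddMonoidAlgebra.single_mul_single, one_mul]⟩

lemma nsmul_le_of_mem_support_pow {f : k[M]} (ℓ : M →+ ℤ) {d : ℤ}
    (h : ∀ w ∈ f.coeff.support, d ≤ ℓ w) (n : ℕ) :
    ∀ w ∈ (f ^ n).coeff.support, n • d ≤ ℓ w := by
  classical
  induction n with
  | zero =>
    intro w hw
    rw [pow_zero, AddMonoidAlgebra.one_def, AddMonoidAlgebra.coeff_single] at hw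
    rw [Finset.mem_singleton.1 (Finsupp.support_single_subset hw), map_zero, zero_smul]
  | succ n ih =>
    intro w hw
    rw [pow_succ] at hw
    obtain ⟨u, hu, v, hv, rfl⟩ :=
      Finset.mem_add.1 (AddMonoidAlgebra.support_coeff_mul_subset _ _ hw)
    rw [succ_nsmul, map_add]
    exact add_le_add (ih u hu) (h v hv)

end AddMonoidAlgebra

section LogCoeff

variable {k G : Type*} [CommRing k] [AddCommGroup G] {S : AddSubmonoid G}

/-- The coefficient of `χ^(u + e)` in `D χ^u`, as a function of `u`. By the Leibniz rule it is
additive: the degree `e` part of `D` has the form `χ^u ↦ ℓ u • χ^(u + e)` with `ℓ` additive.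
Exponents are taken in the ambient group because `u + e` need not lie in `S`. -/
noncomputable def logCoeff (D : Derivation k k[S] k[S]) (e : G) : S →+ k where
  toFun u := (AddMonoidAlgebra.mapDomain S.subtype (D (single u 1))).coeff (u + e)
  map_zero' := by
    rw [← AddMonoidAlgebra.one_def, D.map_one_eq_zero]
    simp
  map_add' u v := by
    have hD : D (single (u + v) 1) =
        single u 1 * D (single v 1) + single v 1 * D (single u 1) := by
      rw [← mul_one (1 : k), ← AddMonoidAlgebra.single_mul_single, D.leibniz]
      simp only [smul_eq_mul, mul_one]
    rw [hD, AddMonoidAlgebra.mapDomain_add, AddMonoidAlgebra.mapDomain_mul,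
      AddMonoidAlgebra.mapDomain_mul, AddMonoidAlgebra.coeff_add, Finsupp.add_apply,
      AddMonoidAlgebra.mapDomain_single, AddMonoidAlgebra.mapDomain_single,
      AddMonoidAlgebra.coeff_single_mul_apply, AddMonoidAlgebra.coeff_single_mul_apply, add_comm]
    simp only [one_mul, AddSubmonoid.subtype_apply, AddSubmonoid.coe_add]
    congr 2 <;> abel

variable {D : Derivation k k[S] k[S]}

lemma logCoeff_apply (D : Derivation k k[S] k[S]) (e : G) (u : S) :
    logCoeff D e u = (AddMonoidAlgebra.mapDomain S.subtype (D (single u 1))).coeff (u + e) :=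
  rfl

lemma coeff_mapDomain_apply_single (D : Derivation k k[S] k[S]) (u : S) (w : G) :
    (AddMonoidAlgebra.mapDomain S.subtype (D (single u 1))).coeff w = logCoeff D (w - u) u := by
  rw [logCoeff_apply, add_sub_cancel]

lemma add_mem_of_logCoeff_ne_zero {e : G} {u : S} (h : logCoeff D e u ≠ 0) : ↑u + e ∈ S := by
  classical
  obtain ⟨v, -, hv⟩ := Finset.mem_image.1
    (Finsupp.mapDomain_support (Finsupp.mem_support_iff.2 h))
  exact hv ▸ v.2

lemma logCoeff_ne_zero_of_mem_support {u w : S} (h : w ∈ (D (single u 1)).coeff.support) :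
    logCoeff D (w - u) u ≠ 0 := by
  rw [← coeff_mapDomain_apply_single]
  exact (Finsupp.mapDomain_apply Subtype.val_injective _ w).trans_ne (Finsupp.mem_support_iff.1 h)

lemma logCoeff_eq_zero {u : S} (h : D (single u 1) = 0) (e : G) : logCoeff D e u = 0 := by
  simp [logCoeff_apply, h]

lemma single_mul_apply_single {u v : S} {c : k}
    (h : ∀ e, logCoeff D e u = c * logCoeff D e v) :
    single v 1 * D (single u 1) = single u c * D (single v 1) := by
  apply AddMonoidAlgebra.mapDomain_injective (f := S.subtype) Subtype.val_injective
  ext w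
  rw [AddMonoidAlgebra.mapDomain_mul, AddMonoidAlgebra.mapDomain_mul,
    AddMonoidAlgebra.mapDomain_single, AddMonoidAlgebra.mapDomain_single,
    AddMonoidAlgebra.coeff_single_mul_apply, AddMonoidAlgebra.coeff_single_mul_apply,
    coeff_mapDomain_apply_single, coeff_mapDomain_apply_single, h, one_mul]
  congr 3
  simp only [AddSubmonoid.subtype_apply]
  abel

lemma single_mul_apply {v : S} {ℓ : S → k}
    (h : ∀ e u, logCoeff D e u = ℓ u * logCoeff D e v) (f : k[S]) :
    single v 1 * D f = eulerMap ℓ f * D (single v 1) := by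
  induction f using AddMonoidAlgebra.induction_linear with
  | zero => simp [eulerMap]
  | add f g hf hg => rw [map_add, mul_add, hf, hg, eulerMap_add, add_mul]
  | single u c =>
    have hu := single_mul_apply_single fun e => h e u
    rw [eulerMap_single, mul_comm (ℓ u), ← smul_eq_mul c, ← AddMonoidAlgebra.smul_single,
      smul_mul_assoc, ← hu, ← mul_smul_comm, ← D.map_smul, AddMonoidAlgebra.smul_single,
      smul_eq_mul, mul_one]

end LogCoeff

namespace Danielewski

variable {σ : Type*} (r : ℕ) (m : σ → ℕ)

/-- The exponents `(a, b)` of the Laurent monomials `x^a y^b` that lie in the coordinate ring of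
`x^m z = y^r`, where `z` is read as `x^(-m) y^r`; the natural number `s` is the exponent of `z`. -/
def exponentMonoid : AddSubmonoid ((σ → ℤ) × ℤ) where
  carrier := {u | ∃ s : ℕ, r * s ≤ u.2 ∧ ∀ i, 0 ≤ u.1 i + m i * s}
  zero_mem' := ⟨0, by simp⟩
  add_mem' := by
    rintro u v ⟨s, hs, hs'⟩ ⟨t, ht, ht'⟩
    refine ⟨s + t, ?_, fun i => ?_⟩
    · simp only [Prod.snd_add]
      push_cast
      linarith
    · simp only [Prod.fst_add, Pi.add_apply]
      push_cast
      linarith [hs' i, ht' i]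

/-- The exponent of `xᵢ`. -/
def expX [DecidableEq σ] (i : σ) : exponentMonoid r m :=
  ⟨(Pi.single i 1, 0), 0, by simp, fun j => by
    simpa using (Pi.single_nonneg.2 zero_le_one : (0 : σ → ℤ) ≤ Pi.single i 1) j⟩

/-- The exponent of `y`. -/
def expY : exponentMonoid r m :=
  ⟨(0, 1), 0, by simp⟩

/-- The exponent of `z = x^(-m) y^r`. -/
def expZ : exponentMonoid r m :=
  ⟨(fun i => -m i, r), 1, by simp⟩

/-- The exponent of `x^a y^b z^c`, where `t = (a, b, c)`. -/
def exponent [Fintype σ] [DecidableEq σ] (t : (σ → ℕ) × ℕ × ℕ) : exponentMonoid r m :=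
  ∑ i, t.1 i • expX r m i + t.2.1 • expY r m + t.2.2 • expZ r m

section Exponents

variable {r m}

lemma coe_exponent [Fintype σ] [DecidableEq σ] (t : (σ → ℕ) × ℕ × ℕ) :
    (exponent r m t : (σ → ℤ) × ℤ) =
      (fun i => (t.1 i : ℤ) - m i * t.2.2, (t.2.1 : ℤ) + r * t.2.2) := by
  ext i
  · simp [exponent, expX, expY, expZ, Prod.fst_sum, Pi.single_apply, sub_eq_add_neg, mul_comm]
  · simp [exponent, expX, expY, expZ, Prod.snd_sum, mul_comm]

lemma exponent_add [Fintype σ] [DecidableEq σ] (t t' : (σ → ℕ) × ℕ × ℕ) :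
    exponent r m (t + t') = exponent r m t + exponent r m t' := by
  simp only [exponent, Prod.fst_add, Prod.snd_add, Pi.add_apply, add_smul, Finset.sum_add_distrib]
  abel

lemma exponent_surjective [Fintype σ] [DecidableEq σ] :
    Function.Surjective (exponent r m) := by
  rintro ⟨⟨a, b⟩, s, hs, hs'⟩
  refine ⟨(fun i => (a i + m i * s).toNat, (b - r * s).toNat, s), ?_⟩
  ext i
  · simp [coe_exponent, hs' i]
  · simp [coe_exponent, hs]

lemma sum_nsmul_expX_add_expZ [Fintype σ] [DecidableEq σ] :
    ∑ i, m i • expX r m i + expZ r m = r • expY r m := by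
  ext i
  · simp [expX, expY, expZ, Prod.fst_sum, Pi.single_apply]
  · simp [expX, expY, expZ, Prod.snd_sum]

variable (r m) in
/-- The monomial valuation with weight `r` at `xᵢ`, `mᵢ` at `y` and `0` at the other variables,
including `z`. -/
def weight (i : σ) : (σ → ℤ) × ℤ →+ ℤ where
  toFun u := r * u.1 i + m i * u.2
  map_zero' := by simp
  map_add' u v := by
    simp only [Prod.fst_add, Prod.snd_add, Pi.add_apply]
    ring

lemma weight_apply (i : σ) (u : (σ → ℤ) × ℤ) : weight r m i u = r * u.1 i + m i * u.2 :=
  rfl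

lemma weight_expX_self [DecidableEq σ] (i : σ) : weight r m i (expX r m i) = r := by
  simp [weight_apply, expX]

lemma weight_expX_of_ne [DecidableEq σ] {i j : σ} (h : i ≠ j) :
    weight r m i (expX r m j) = 0 := by
  simp [weight_apply, expX, h]

lemma weight_expZ (i : σ) : weight r m i (expZ r m) = 0 := by
  simp only [weight_apply, expZ]
  ring

lemma weight_nonneg {u : (σ → ℤ) × ℤ} (hu : u ∈ exponentMonoid r m) (i : σ) :
    0 ≤ weight r m i u := by
  obtain ⟨s, hs, hs'⟩ := hu
  rw [weight_apply]
  nlinarith [mul_nonneg (Nat.cast_nonneg (α := ℤ) r) (hs' i),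
    mul_le_mul_of_nonneg_left hs (Nat.cast_nonneg (α := ℤ) (m i))]

lemma weight_nonneg_of_expX_add_mem [DecidableEq σ] (hr : 2 ≤ r) {i : σ} (hm : 2 ≤ m i)
    {e : (σ → ℤ) × ℤ} (hX : ↑(expX r m i) + e ∈ exponentMonoid r m)
    (hY : ↑(expY r m) + e ∈ exponentMonoid r m) : 0 ≤ weight r m i e := by
  obtain ⟨a, b⟩ := e
  obtain ⟨s, hs, hs'⟩ := hX
  obtain ⟨t, ht, ht'⟩ := hY
  have ha : 0 ≤ 1 + a i + m i * s := by simpa [expX] using hs' i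
  have ha' : 0 ≤ a i + m i * t := by simpa [expY] using ht' i
  have hb : r * s ≤ b := by simpa [expX] using hs
  have hb' : r * t ≤ 1 + b := by simpa [expY] using ht
  rw [weight_apply]
  zify at hr hm
  rcases le_or_gt (r * t : ℤ) b with hbt | hbt
  · nlinarith
  · have hst : (s : ℤ) + 1 ≤ t := by nlinarith
    -- Here `b = r t - 1`, and the bound reduces to `(r - 1) (mᵢ - 1) ≥ 1`.
    have hbt' : b = r * t - 1 := by linarith
    have hat : 0 ≤ 1 + a i + m i * (t - 1) := by nlinarith
    subst hbt'
    nlinarith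

lemma exists_eq_nsmul_expX_add [DecidableEq σ] (hr : 0 < r) {i : σ} {u : exponentMonoid r m}
    {N : ℕ} (h : r * (N + m i : ℕ) ≤ weight r m i u) :
    ∃ v, u = N • expX r m i + v := by
  obtain ⟨⟨a, b⟩, s, hs, hs'⟩ := u
  rw [weight_apply] at h
  have hr' : (0 : ℤ) < r := by exact_mod_cast hr
  have hsb : (s : ℤ) ≤ b / r := (Int.le_ediv_iff_mul_le hr').2 (by linarith)
  obtain ⟨q, hq⟩ := Int.eq_ofNat_of_zero_le ((Nat.cast_nonneg s).trans hsb)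
  have hqb : r * q ≤ b := hq ▸ Int.mul_ediv_self_le hr'.ne'
  have hbq : b < r * q + r := hq ▸ Int.lt_mul_ediv_self_add hr'
  refine ⟨⟨(a - N • Pi.single i 1, b), q, hqb, fun j => ?_⟩, by ext j <;> simp [expX]⟩
  rcases eq_or_ne j i with rfl | hj
  · suffices 0 ≤ a j - N + m j * q by simpa
    refine nonneg_of_mul_nonneg_right ?_ hr'
    push_cast at h
    nlinarith [Nat.cast_nonneg (α := ℤ) (m j)]
  · have := hs' j
    have := mul_le_mul_of_nonneg_left (hq ▸ hsb) (Nat.cast_nonneg (α := ℤ) (m j))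
    simp only [Pi.sub_apply, Pi.smul_apply, Pi.single_eq_of_ne hj, smul_zero, sub_zero]
    linarith

lemma exists_eq_sum_nsmul_expX [Fintype σ] [DecidableEq σ] (hr : 0 < r) {u : exponentMonoid r m}
    (hu : (u : (σ → ℤ) × ℤ).2 = 0) : ∃ a : σ → ℕ, u = ∑ i, a i • expX r m i := by
  obtain ⟨⟨a, b, c⟩, rfl⟩ := exponent_surjective u
  rw [coe_exponent] at hu
  have hb : b = 0 := by dsimp only at hu; norm_cast at hu; omega
  have hc : c = 0 := by dsimp only at hu; norm_cast at hu; simpa [hb, hr.ne'] using hu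
  exact ⟨a, by simp [exponent, hb, hc]⟩

end Exponents

instance {k : Type*} [CommRing k] [CharZero k] : CharZero k[exponentMonoid r m] :=
  charZero_of_injective_algebraMap (FaithfulSMul.algebraMap_injective k _)

instance {k : Type*} [CommRing k] [IsDomain k] : IsDomain k[exponentMonoid r m] :=
  (AddMonoidAlgebra.mapDomain_injective (R := k) Subtype.val_injective).isDomain
    (AddMonoidAlgebra.mapDomainRingHom k (exponentMonoid r m).subtype)

section Derivation

variable {r m} {k : Type*} [CommRing k]
  {D : Derivation k k[exponentMonoid r m] k[exponentMonoid r m]}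

lemma logCoeff_eq_zero_of_weight_neg {i : σ} {e : (σ → ℤ) × ℤ} (he : weight r m i e < 0)
    {u : exponentMonoid r m} (hu : weight r m i u = 0) : logCoeff D e u = 0 := by
  by_contra h
  have hue := weight_nonneg (add_mem_of_logCoeff_ne_zero h) i
  rw [map_add, hu, zero_add] at hue
  exact hue.not_gt he

variable [DecidableEq σ]

lemma sum_mul_logCoeff_expX_add_logCoeff_expZ [Fintype σ]
    (D : Derivation k k[exponentMonoid r m] k[exponentMonoid r m]) (e : (σ → ℤ) × ℤ) :
    ∑ i, m i * logCoeff D e (expX r m i) + logCoeff D e (expZ r m) =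
      r * logCoeff D e (expY r m) := by
  simpa only [map_add, map_sum, map_nsmul, nsmul_eq_mul] using
    congrArg (logCoeff D e) (sum_nsmul_expX_add_expZ (r := r) (m := m))

variable [Finite σ] [IsDomain k] [CharZero k]

lemma le_weight_of_mem_support (hr : 2 ≤ r) {i : σ} (hm : 2 ≤ m i)
    {w : exponentMonoid r m} (hw : w ∈ (D (single (expX r m i) 1)).coeff.support) :
    r ≤ weight r m i w := by
  cases nonempty_fintype σ
  by_contra! hlt
  set e : (σ → ℤ) × ℤ := w - expX r m i
  have he : weight r m i e < 0 := by
    rwa [map_sub, weight_expX_self, sub_neg]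
  have hX : logCoeff D e (expX r m i) ≠ 0 := logCoeff_ne_zero_of_mem_support hw
  have hrel : m i * logCoeff D e (expX r m i) = r * logCoeff D e (expY r m) := by
    rw [← sum_mul_logCoeff_expX_add_logCoeff_expZ,
      logCoeff_eq_zero_of_weight_neg he (weight_expZ i), add_zero,
      Finset.sum_eq_single_of_mem i (Finset.mem_univ i)]
    intro j _ hj
    rw [logCoeff_eq_zero_of_weight_neg he (weight_expX_of_ne hj.symm), mul_zero]
  have hY : logCoeff D e (expY r m) ≠ 0 :=
    right_ne_zero_of_mul (hrel ▸ mul_ne_zero (Nat.cast_ne_zero.2 (by omega)) hX)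
  exact he.not_ge (weight_nonneg_of_expX_add_mem hr hm (add_mem_of_logCoeff_ne_zero hX)
    (add_mem_of_logCoeff_ne_zero hY))

lemma single_expX_pow_dvd (hr : 2 ≤ r) {i : σ} (hm : 2 ≤ m i) (N : ℕ) :
    single (expX r m i) 1 ^ N ∣ D (single (expX r m i) 1) ^ (N + m i) := by
  rw [AddMonoidAlgebra.single_pow, one_pow]
  refine single_dvd_of_forall_mem_support fun w hw => exists_eq_nsmul_expX_add (by omega) ?_
  have hle := nsmul_le_of_mem_support_pow ((weight r m i).comp (exponentMonoid r m).subtype)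
    (fun _ => le_weight_of_mem_support hr hm) (N + m i) w hw
  rwa [nsmul_eq_mul, mul_comm] at hle

lemma apply_single_expX_eq_zero (hr : 2 ≤ r) {i : σ} (hm : 2 ≤ m i)
    (hD : IsLocallyNilpotent D) : D (single (expX r m i) 1) = 0 :=
  hD.apply_eq_zero_of_pow_dvd (m i) (single_expX_pow_dvd hr hm)

end Derivation

section Kernel

variable {r m} {k : Type*} [CommRing k] [Finite σ] [DecidableEq σ]
  {D : Derivation k k[exponentMonoid r m] k[exponentMonoid r m]}

lemma logCoeff_eq_snd_mul (h : ∀ i, D (single (expX r m i) 1) = 0) (e : (σ → ℤ) × ℤ)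
    (u : exponentMonoid r m) :
    logCoeff D e u = ((u : (σ → ℤ) × ℤ).2 : k) * logCoeff D e (expY r m) := by
  cases nonempty_fintype σ
  have hX (i : σ) : logCoeff D e (expX r m i) = 0 := logCoeff_eq_zero (h i) e
  have hZ : logCoeff D e (expZ r m) = r * logCoeff D e (expY r m) := by
    simpa [hX] using sum_mul_logCoeff_expX_add_logCoeff_expZ D e
  obtain ⟨t, rfl⟩ := exponent_surjective u
  rw [coe_exponent, exponent]
  simp only [map_add, map_sum, map_nsmul, hX, hZ, smul_zero, Finset.sum_const_zero, zero_add,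
    nsmul_eq_mul]
  push_cast
  ring

lemma apply_single_expY_ne_zero [IsDomain k] [CharZero k]
    (h : ∀ i, D (single (expX r m i) 1) = 0) (hD : D ≠ 0) : D (single (expY r m) 1) ≠ 0 := by
  contrapose! hD
  ext f : 1
  have hf := single_mul_apply (logCoeff_eq_snd_mul h) f
  rw [hD, mul_zero] at hf
  exact (mul_eq_zero.1 hf).resolve_left (by simp)

lemma snd_eq_zero_of_mem_support [IsDomain k] [CharZero k]
    (h : ∀ i, D (single (expX r m i) 1) = 0) (hD : D ≠ 0) {f : k[exponentMonoid r m]}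
    (hf : D f = 0) {u : exponentMonoid r m} (hu : u ∈ f.coeff.support) :
    (u : (σ → ℤ) × ℤ).2 = 0 := by
  have hEuler := single_mul_apply (logCoeff_eq_snd_mul h) f
  rw [hf, mul_zero, eq_comm, mul_eq_zero, or_iff_left (apply_single_expY_ne_zero h hD)] at hEuler
  have hcoeff : ((u : (σ → ℤ) × ℤ).2 : k) * f.coeff u = 0 := by
    rw [← coeff_eulerMap fun u : exponentMonoid r m => ((u : (σ → ℤ) × ℤ).2 : k), hEuler,
      AddMonoidAlgebra.coeff_zero, Finsupp.zero_apply]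
  exact Int.cast_eq_zero.1 ((mul_eq_zero.1 hcoeff).resolve_right (Finsupp.mem_support_iff.1 hu))

lemma mem_adjoin_of_forall_snd_eq_zero (hr : 0 < r) {f : k[exponentMonoid r m]}
    (hf : ∀ u ∈ f.coeff.support, (u : (σ → ℤ) × ℤ).2 = 0) :
    f ∈ Algebra.adjoin k (Set.range fun i => single (expX r m i) (1 : k)) := by
  cases nonempty_fintype σ
  rw [← AddMonoidAlgebra.sum_coeff_single f]
  refine sum_mem fun u hu => ?_
  obtain ⟨a, ha⟩ := exists_eq_sum_nsmul_expX hr (hf u hu)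
  have hprod : single u (f.coeff u) = f.coeff u • ∏ i, single (expX r m i) (1 : k) ^ a i := by
    simp [AddMonoidAlgebra.single_pow, AddMonoidAlgebra.prod_single, ← ha]
  rw [hprod]
  exact Subalgebra.smul_mem _ (Subalgebra.prod_mem _ fun i _ =>
    Subalgebra.pow_mem _ (Algebra.subset_adjoin (Set.mem_range_self i)) _) _

theorem apply_eq_zero_iff_mem_adjoin [IsDomain k] [CharZero k] (hr : 2 ≤ r) (hm : ∀ i, 2 ≤ m i)
    (hD : D ≠ 0) (hln : IsLocallyNilpotent D) {f : k[exponentMonoid r m]} :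
    D f = 0 ↔ f ∈ Algebra.adjoin k (Set.range fun i => single (expX r m i) (1 : k)) := by
  have hX (i : σ) := apply_single_expX_eq_zero hr (hm i) hln
  constructor
  · exact fun hf => mem_adjoin_of_forall_snd_eq_zero (by omega)
      fun u => snd_eq_zero_of_mem_support hX hD hf
  · exact fun hf => Derivation.eqOn_adjoin (D1 := D) (D2 := 0) (Set.forall_mem_range.2 hX) hf

end Kernel

section Presentation

variable {r m} {k A B : Type*} [CommSemiring k] [CommSemiring A] [CommSemiring B] [Fintype σ]

/-- The value of the monomial `x^a y^b z^c` at a point of a ring `A`, where `t = (a, b, c)`. -/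
def evalMonomial (x : σ → A) (y z : A) (t : (σ → ℕ) × ℕ × ℕ) : A :=
  (∏ i, x i ^ t.1 i) * y ^ t.2.1 * z ^ t.2.2

lemma evalMonomial_add (x : σ → A) (y z : A) (t t' : (σ → ℕ) × ℕ × ℕ) :
    evalMonomial x y z (t + t') = evalMonomial x y z t * evalMonomial x y z t' := by
  simp only [evalMonomial, Prod.fst_add, Prod.snd_add, Pi.add_apply, pow_add,
    Finset.prod_mul_distrib]
  ring

lemma map_evalMonomial (f : A →+* B) (x : σ → A) (y z : A) (t : (σ → ℕ) × ℕ × ℕ) :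
    f (evalMonomial x y z t) = evalMonomial (f ∘ x) (f y) (f z) t := by
  simp [evalMonomial]

variable [DecidableEq σ]

lemma evalMonomial_single (t : (σ → ℕ) × ℕ × ℕ) :
    evalMonomial (fun i => single (expX r m i) (1 : k)) (single (expY r m) 1)
      (single (expZ r m) 1) t = single (exponent r m t) 1 := by
  simp [evalMonomial, exponent, AddMonoidAlgebra.single_pow, AddMonoidAlgebra.prod_single,
    AddMonoidAlgebra.single_mul_single]

variable {x : σ → A} {y z : A}

lemma evalMonomial_eq_of_exponent_eq (h : (∏ i, x i ^ m i) * z = y ^ r)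
    {t t' : (σ → ℕ) × ℕ × ℕ} (ht : exponent r m t = exponent r m t') :
    evalMonomial x y z t = evalMonomial x y z t' := by
  wlog hle : t.2.2 ≤ t'.2.2 generalizing t t'
  · exact (this ht.symm (le_of_not_ge hle)).symm
  obtain ⟨a, b, c⟩ := t
  obtain ⟨a', b', c'⟩ := t'
  obtain ⟨d, rfl : c' = c + d⟩ := Nat.exists_eq_add_of_le hle
  rw [Subtype.ext_iff, coe_exponent, coe_exponent, Prod.mk.injEq, funext_iff] at ht
  push_cast at ht
  have ha (i : σ) : a' i = a i + m i * d := by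
    zify
    linarith [ht.1 i]
  have hb : b = r * d + b' := by
    zify
    linarith [ht.2]
  simp only [evalMonomial, ha, hb, pow_add, pow_mul, Finset.prod_mul_distrib, Finset.prod_pow, ← h]
  ring

/-- The monoid homomorphism `u ↦ x^a y^b z^c` determined by a solution of `x^m z = y^r`, where
`x^a y^b z^c` is any monomial of exponent `u`. -/
noncomputable def exponentHom (h : (∏ i, x i ^ m i) * z = y ^ r) :
    Multiplicative (exponentMonoid r m) →* A where
  toFun u := evalMonomial x y z (Function.surjInv exponent_surjective u.toAdd)
  map_one' := by
    rw [evalMonomial_eq_of_exponent_eq h (t' := 0)]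
    · simp [evalMonomial]
    · exact (Function.surjInv_eq _ _).trans (by simp [exponent])
  map_mul' u v := by
    rw [← evalMonomial_add]
    apply evalMonomial_eq_of_exponent_eq h
    simp only [exponent_add, Function.surjInv_eq, toAdd_mul]

lemma exponentHom_exponent (h : (∏ i, x i ^ m i) * z = y ^ r) (t : (σ → ℕ) × ℕ × ℕ) :
    exponentHom h (.ofAdd (exponent r m t)) = evalMonomial x y z t :=
  evalMonomial_eq_of_exponent_eq h (Function.surjInv_eq _ _)

variable [Algebra k A]

variable (k) in
/-- The homomorphism out of the monoid algebra determined by a solution of `x^m z = y^r`. -/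
noncomputable def liftMonoidAlgebra (h : (∏ i, x i ^ m i) * z = y ^ r) :
    k[exponentMonoid r m] →ₐ[k] A :=
  AddMonoidAlgebra.lift k A _ (exponentHom h)

lemma liftMonoidAlgebra_single (h : (∏ i, x i ^ m i) * z = y ^ r) (t : (σ → ℕ) × ℕ × ℕ) :
    liftMonoidAlgebra k h (single (exponent r m t) 1) = evalMonomial x y z t := by
  rw [liftMonoidAlgebra, AddMonoidAlgebra.lift_single, one_smul, exponentHom_exponent]

lemma liftMonoidAlgebra_single_expX (h : (∏ i, x i ^ m i) * z = y ^ r) (i : σ) :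
    liftMonoidAlgebra k h (single (expX r m i) 1) = x i := by
  have := liftMonoidAlgebra_single (k := k) h (Pi.single i 1, 0, 0)
  simpa [exponent, evalMonomial, Pi.single_apply] using this

lemma liftMonoidAlgebra_single_expY (h : (∏ i, x i ^ m i) * z = y ^ r) :
    liftMonoidAlgebra k h (single (expY r m) 1) = y := by
  simpa [exponent, evalMonomial] using liftMonoidAlgebra_single (k := k) h (0, 1, 0)

lemma liftMonoidAlgebra_single_expZ (h : (∏ i, x i ^ m i) * z = y ^ r) :
    liftMonoidAlgebra k h (single (expZ r m) 1) = z := by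
  simpa [exponent, evalMonomial] using liftMonoidAlgebra_single (k := k) h (0, 0, 1)

end Presentation

section CoordinateRing

variable (k : Type*) [CommRing k] [Fintype σ]

/-- The ideal of the variety `x^m z = y^r`; the variable `xᵢ` is `X (inl i)`, while `y` and `z` are
`X (inr 0)` and `X (inr 1)`. -/
noncomputable def relationIdeal : Ideal (MvPolynomial (σ ⊕ Fin 2) k) :=
  Ideal.span {(∏ i, X (Sum.inl i) ^ m i) * X (Sum.inr 1) - X (Sum.inr 0) ^ r}

/-- The coordinate ring of the variety `x^m z = y^r`. -/
abbrev CoordinateRing : Type _ :=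
  MvPolynomial (σ ⊕ Fin 2) k ⧸ relationIdeal r m k

/-- The homomorphism from the polynomial ring in the `xᵢ` to the coordinate ring. -/
noncomputable def polynomialMap : MvPolynomial σ k →ₐ[k] CoordinateRing r m k :=
  (Ideal.Quotient.mkₐ k (relationIdeal r m k)).comp (rename Sum.inl)

lemma mk_relation :
    (∏ i, Ideal.Quotient.mk (relationIdeal r m k) (X (Sum.inl i)) ^ m i) *
        Ideal.Quotient.mk (relationIdeal r m k) (X (Sum.inr 1)) =
      Ideal.Quotient.mk (relationIdeal r m k) (X (Sum.inr 0)) ^ r := by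
  simp only [← map_pow, ← map_prod, ← map_mul]
  exact Ideal.Quotient.eq.2 (Ideal.mem_span_singleton_self _)

variable [DecidableEq σ]

/-- The homomorphism from the coordinate ring to the monoid algebra sending the variables to the
monomials of exponents `expX`, `expY` and `expZ`. -/
noncomputable def toMonoidAlgebra : CoordinateRing r m k →ₐ[k] k[exponentMonoid r m] :=
  Ideal.Quotient.liftₐ (relationIdeal r m k)
    (aeval (Sum.elim (fun i => single (expX r m i) 1) ![single (expY r m) 1, single (expZ r m) 1]))
    fun f hf => by
      refine RingHom.mem_ker.1 (Ideal.span_le.2 (Set.singleton_subset_iff.2 ?_) hf)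
      simp [RingHom.mem_ker, AddMonoidAlgebra.single_pow, AddMonoidAlgebra.prod_single,
        AddMonoidAlgebra.single_mul_single, sum_nsmul_expX_add_expZ]

lemma toMonoidAlgebra_mk (p : MvPolynomial (σ ⊕ Fin 2) k) :
    toMonoidAlgebra r m k (Ideal.Quotient.mk _ p) =
      aeval (Sum.elim (fun i => single (expX r m i) 1)
        ![single (expY r m) 1, single (expZ r m) 1]) p :=
  rfl

lemma toMonoidAlgebra_comp_liftMonoidAlgebra :
    (toMonoidAlgebra r m k).comp (liftMonoidAlgebra k (mk_relation r m k)) = AlgHom.id k _ := by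
  refine AddMonoidAlgebra.algHom_ext (fun u => ?_) (Subsingleton.elim _ _)
  obtain ⟨t, rfl⟩ := exponent_surjective u
  rw [AlgHom.comp_apply, liftMonoidAlgebra_single, AlgHom.id_apply, ← evalMonomial_single]
  refine (map_evalMonomial (toMonoidAlgebra r m k).toRingHom _ _ _ t).trans ?_
  simp [Function.comp_def, toMonoidAlgebra_mk]

lemma liftMonoidAlgebra_comp_toMonoidAlgebra :
    (liftMonoidAlgebra k (mk_relation r m k)).comp (toMonoidAlgebra r m k) = AlgHom.id k _ := by
  refine Ideal.Quotient.algHom_ext _ (MvPolynomial.algHom_ext ?_)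
  rintro (i | j)
  · simp [toMonoidAlgebra_mk, liftMonoidAlgebra_single_expX]
  · fin_cases j <;>
      simp [toMonoidAlgebra_mk, liftMonoidAlgebra_single_expY, liftMonoidAlgebra_single_expZ]

/-- The isomorphism between the coordinate ring of `x^m z = y^r` and the monoid algebra of
`exponentMonoid r m`. -/
noncomputable def equivMonoidAlgebra : CoordinateRing r m k ≃ₐ[k] k[exponentMonoid r m] :=
  .ofAlgHom _ _ (toMonoidAlgebra_comp_liftMonoidAlgebra r m k)
    (liftMonoidAlgebra_comp_toMonoidAlgebra r m k)

variable {r m k}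

lemma mem_range_polynomialMap_iff {b : CoordinateRing r m k} :
    b ∈ (polynomialMap r m k).range ↔
      equivMonoidAlgebra r m k b ∈
        Algebra.adjoin k (Set.range fun i => single (expX r m i) (1 : k)) := by
  have hcomp : (equivMonoidAlgebra r m k : _ →ₐ[k] _).comp (polynomialMap r m k) =
      aeval fun i => single (expX r m i) (1 : k) := by
    ext i : 1
    simp [polynomialMap, equivMonoidAlgebra, toMonoidAlgebra_mk]
  rw [Algebra.adjoin_range_eq_range_aeval, ← hcomp]
  simp

end CoordinateRing

end Danielewski

open Danielewski in
theorem stmt13_general {k σ : Type*} [CommRing k] [IsDomain k] [CharZero k] [Fintype σ] {r : ℕ}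
    (hr : 2 ≤ r) {m : σ → ℕ} (hm : ∀ i, 2 ≤ m i)
    {D : Derivation k (CoordinateRing r m k) (CoordinateRing r m k)} (hD : D ≠ 0)
    (hln : IsLocallyNilpotent D) (b : CoordinateRing r m k) :
    D b = 0 ↔ b ∈ (polynomialMap r m k).range := by
  classical
  rw [mem_range_polynomialMap_iff, ← apply_eq_zero_iff_mem_adjoin hr hm
    (conjDerivation_ne_zero hD (equivMonoidAlgebra r m k)) (hln.conjDerivation _),
    conjDerivation_apply, map_eq_zero_iff _ (equivMonoidAlgebra r m k).injective]

/-- On `B̂ = ℂ[x₁,…,xₙ,y,z]/(x^{[m]}z − y^r)` with all `mᵢ ≥ 2` and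
`r ≥ 2`, every nonzero locally nilpotent `ℂ`-derivation has kernel exactly the
image of the polynomial subring `ℂ[x₁,…,xₙ]`. -/
theorem stmt13 (n r : ℕ) (hr : 2 ≤ r) (m : Fin n → ℕ) (hm : ∀ i, 2 ≤ m i)
    (ι : MvPolynomial (Fin n) ℂ →+* MvPolynomial (Fin n ⊕ Fin 2) ℂ)
    (hι : ι = (MvPolynomial.rename (Sum.inl : Fin n → Fin n ⊕ Fin 2)).toRingHom)
    (y z xm : MvPolynomial (Fin n ⊕ Fin 2) ℂ)
    (hy : y = MvPolynomial.X (Sum.inr 0)) (hz : z = MvPolynomial.X (Sum.inr 1))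
    (hxm : xm = ∏ i, MvPolynomial.X (Sum.inl i) ^ m i)
    (I : Ideal (MvPolynomial (Fin n ⊕ Fin 2) ℂ))
    (hI : I = Ideal.span {xm * z - y ^ r})
    (D : Derivation ℂ
      (MvPolynomial (Fin n ⊕ Fin 2) ℂ ⧸ I) (MvPolynomial (Fin n ⊕ Fin 2) ℂ ⧸ I))
    (hD : D ≠ 0) (hln : ∀ b, ∃ k : ℕ, (⇑D)^[k] b = 0) :
    ∀ b, D b = 0 ↔ b ∈ RingHom.range ((Ideal.Quotient.mk I).comp ι) := by
  subst hι hy hz hxm hI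
  exact stmt13_general hr hm hD hln
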